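/- arXiv:math/0606734 — 2 statements merged into one kernel-verified Lean document; each statement's English description precedes it below -/
import Mathlib

section
/- Let n ≥ 2, let 0 < θ and θ/2 ≤ φ ≤ π/2. Then Ω_n(φ) · A(n,θ) ≤ Ω_n · A(n,θ,φ), where Ω_n(φ) is the surface measure of the cap Cap(n,φ) and Ω_n is the surface measure of the whole sphere S^{n−1}. -/
noncomputable section

/-- The "North pole" `(0, …, 0, 1)` of the unit sphere in `ℝ^n`. -/
def north (n : ℕ) : EuclideanSpace ℝ (Fin n) :=
  if h : 0 < n then EuclideanSpace.single ⟨n - 1, Nat.sub_lt h Nat.one_pos⟩ 1 else 0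

/-- Angular distance between two points: `arccos ⟨x, y⟩`. -/
def aDist {n : ℕ} (x y : EuclideanSpace ℝ (Fin n)) : ℝ := Real.arccos (inner ℝ x y : ℝ)

/-- A finite set of unit vectors with pairwise angular distance at least `θ`. -/
def IsCode {n : ℕ} (θ : ℝ) (C : Finset (EuclideanSpace ℝ (Fin n))) : Prop :=
  (∀ x ∈ C, ‖x‖ = 1) ∧ ∀ x ∈ C, ∀ y ∈ C, x ≠ y → θ ≤ aDist x y

/-- `A(n, θ)`: maximal size of a `θ`-code on the unit sphere `S^{n-1} ⊂ ℝ^n`. -/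
def sphereMax (n : ℕ) (θ : ℝ) : ℕ :=
  sSup {M | ∃ C : Finset (EuclideanSpace ℝ (Fin n)), IsCode θ C ∧ C.card = M}

/-- `A(n, θ, φ)`: maximal size of a `θ`-code in the cap of angular radius `φ` about the
North pole. -/
def capMax (n : ℕ) (θ φ : ℝ) : ℕ :=
  sSup {M | ∃ C : Finset (EuclideanSpace ℝ (Fin n)), IsCode θ C ∧
    (∀ x ∈ C, aDist x (north n) ≤ φ) ∧ C.card = M}

/-- `A(n, θ, [ψ, φ])`: maximal size of a `θ`-code in the strip `Z(n, [ψ, φ])`. -/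
def stripMax (n : ℕ) (θ ψ φ : ℝ) : ℕ :=
  sSup {M | ∃ C : Finset (EuclideanSpace ℝ (Fin n)), IsCode θ C ∧
    (∀ x ∈ C, ψ ≤ aDist x (north n) ∧ aDist x (north n) ≤ φ) ∧ C.card = M}

/-- `m(n, d)`: maximal number of points in the closed unit ball of `ℝ^n` with pairwise
Euclidean distances at least `d`. -/
def ballMax (n : ℕ) (d : ℝ) : ℕ :=
  sSup {M | ∃ C : Finset (EuclideanSpace ℝ (Fin n)), (∀ x ∈ C, ‖x‖ ≤ 1) ∧
    (∀ x ∈ C, ∀ y ∈ C, x ≠ y → d ≤ dist x y) ∧ C.card = M}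

/-- `ω(θ, α, β) = arccos((cos θ - cos α cos β) / (sin α sin β))`. -/
def omega2 (θ α β : ℝ) : ℝ :=
  Real.arccos ((Real.cos θ - Real.cos α * Real.cos β) / (Real.sin α * Real.sin β))

/-- `ω(θ, α) := ω(θ, α, α)`. -/
def omega1 (θ α : ℝ) : ℝ := omega2 θ α α

end


theorem aDist_map13 {n : ℕ} (T : EuclideanSpace ℝ (Fin n) ≃ₗᵢ[ℝ] EuclideanSpace ℝ (Fin n))
    (x y : EuclideanSpace ℝ (Fin n)) : aDist (T x) (T y) = aDist x y := by
  simp [aDist, LinearIsometryEquiv.inner_map_map]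

theorem norm_north13 (n : ℕ) (hn : 2 ≤ n) : ‖north n‖ = 1 := by
  unfold north
  rw [dif_pos (by omega)]
  simp

theorem exists_iso13 {n : ℕ} (x y : EuclideanSpace ℝ (Fin n)) (h : ‖x‖ = ‖y‖) :
    ∃ T : EuclideanSpace ℝ (Fin n) ≃ₗᵢ[ℝ] EuclideanSpace ℝ (Fin n), T x = y :=
  ⟨_, Submodule.reflection_sub h⟩

theorem measurable_cap13 {n : ℕ} (x : EuclideanSpace ℝ (Fin n)) (φ : ℝ) :
    MeasurableSet {y : EuclideanSpace ℝ (Fin n) | aDist y x ≤ φ} := by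
  apply IsClosed.measurableSet
  apply isClosed_le _ continuous_const
  unfold aDist
  exact Real.continuous_arccos.comp (continuous_id.inner continuous_const)

theorem aDist_comm13 {n : ℕ} (x y : EuclideanSpace ℝ (Fin n)) : aDist x y = aDist y x := by
  unfold aDist
  rw [real_inner_comm]

open MeasureTheory in
theorem cap_measure13 {n : ℕ} (d : ℝ) (x y : EuclideanSpace ℝ (Fin n)) (h : ‖x‖ = ‖y‖) (φ : ℝ) :
    μH[d] {z : EuclideanSpace ℝ (Fin n) | ‖z‖ = 1 ∧ aDist z y ≤ φ} =
    μH[d] {z : EuclideanSpace ℝ (Fin n) | ‖z‖ = 1 ∧ aDist z x ≤ φ} := by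
  obtain ⟨T, hT⟩ := exists_iso13 x y h
  have := T.toIsometryEquiv.hausdorffMeasure_preimage d
    {z : EuclideanSpace ℝ (Fin n) | ‖z‖ = 1 ∧ aDist z y ≤ φ}
  rw [← this]
  congr 1
  ext z
  simp [← hT, aDist_map13]

open MeasureTheory in
theorem stmt13 (n : ℕ) (hn : 2 ≤ n) (θ φ : ℝ) (hθ : 0 < θ) (h1 : θ / 2 ≤ φ)
    (h2 : φ ≤ Real.pi / 2) :
    μH[(n : ℝ) - 1] {x : EuclideanSpace ℝ (Fin n) | ‖x‖ = 1 ∧ aDist x (north n) ≤ φ} *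
        (sphereMax n θ : ENNReal) ≤
      μH[(n : ℝ) - 1] {x : EuclideanSpace ℝ (Fin n) | ‖x‖ = 1} *
        (capMax n θ φ : ENNReal) := by
  classical
  by_cases hb : BddAbove {M | ∃ C : Finset (EuclideanSpace ℝ (Fin n)), IsCode θ C ∧ C.card = M}
  swap
  · have : sphereMax n θ = 0 := by
      unfold sphereMax
      exact Nat.sSup_of_not_bddAbove hb
    simp [this]
  have hne : {M | ∃ C : Finset (EuclideanSpace ℝ (Fin n)), IsCode θ C ∧ C.card = M}.Nonempty :=
    ⟨0, ∅, by simp [IsCode], rfl⟩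
  obtain ⟨C, hC, hCM⟩ := Nat.sSup_mem hne hb
  change C.card = sphereMax n θ at hCM
  have key : ∀ y : EuclideanSpace ℝ (Fin n), ‖y‖ = 1 →
      (C.filter (fun x => aDist y x ≤ φ)).card ≤ capMax n θ φ := by
    intro y hy
    obtain ⟨T, hT⟩ := exists_iso13 y (north n) (by rw [hy, norm_north13 n hn])
    apply le_csSup
    · refine hb.mono ?_
      rintro M ⟨D, hD, -, hM⟩
      exact ⟨D, hD, hM⟩
    · refine ⟨(C.filter (fun x => aDist y x ≤ φ)).image T, ⟨?_, ?_⟩, ?_, ?_⟩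
      · intro z hz
        obtain ⟨x, hx, rfl⟩ := Finset.mem_image.1 hz
        rw [T.norm_map]
        exact hC.1 x (Finset.mem_filter.1 hx).1
      · intro z hz w hw hzw
        obtain ⟨x, hx, rfl⟩ := Finset.mem_image.1 hz
        obtain ⟨x', hx', rfl⟩ := Finset.mem_image.1 hw
        rw [aDist_map13]
        exact hC.2 x (Finset.mem_filter.1 hx).1 x' (Finset.mem_filter.1 hx').1
          (fun h => hzw (by rw [h]))
      · intro z hz
        obtain ⟨x, hx, rfl⟩ := Finset.mem_image.1 hz
        rw [← hT, aDist_map13, aDist_comm13]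
        exact (Finset.mem_filter.1 hx).2
      · exact Finset.card_image_of_injective _ T.injective
  set μ : Measure (EuclideanSpace ℝ (Fin n)) := μH[(n : ℝ) - 1] with hμ
  set S : Set (EuclideanSpace ℝ (Fin n)) := {x | ‖x‖ = 1} with hS
  have hSm : MeasurableSet S := (isClosed_eq continuous_norm continuous_const).measurableSet
  calc μ {x | ‖x‖ = 1 ∧ aDist x (north n) ≤ φ} * (sphereMax n θ : ENNReal)
      = ∑ x ∈ C, (μ.restrict S) {y | aDist y x ≤ φ} := by
        rw [← hCM, mul_comm, ← nsmul_eq_mul, ← Finset.sum_const]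
        refine Finset.sum_congr rfl fun x hx => ?_
        rw [Measure.restrict_apply (measurable_cap13 x φ),
          hμ, cap_measure13 _ x (north n) (by rw [hC.1 x hx, norm_north13 n hn])]
        congr 1
        ext z
        simp [hS, and_comm]
    _ = ∑ x ∈ C, ∫⁻ y, ({y | aDist y x ≤ φ} : Set _).indicator 1 y ∂(μ.restrict S) := by
        refine Finset.sum_congr rfl fun x hx => ?_
        rw [lintegral_indicator_one (measurable_cap13 x φ)]
    _ = ∫⁻ y in S, ∑ x ∈ C, ({y | aDist y x ≤ φ} : Set _).indicator 1 y ∂μ := by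
        rw [lintegral_finsetSum]
        intro x hx
        exact measurable_one.indicator (measurable_cap13 x φ)
    _ ≤ ∫⁻ y in S, (capMax n θ φ : ENNReal) ∂μ := by
        refine setLIntegral_mono' hSm fun y hy => ?_
        have := key y hy
        rw [Finset.card_filter] at this
        have h3 : ∑ x ∈ C, ({y | aDist y x ≤ φ} : Set _).indicator (1 : EuclideanSpace ℝ (Fin n) → ENNReal) y =
          ((∑ x ∈ C, if aDist y x ≤ φ then 1 else 0 : ℕ) : ENNReal) := by
          push_cast
          exact Finset.sum_congr rfl fun x hx => by simp [Set.indicator_apply]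
        rw [h3]
        exact_mod_cast this
    _ = μ S * (capMax n θ φ : ENNReal) := by
        rw [setLIntegral_const, mul_comm]
end

section
/- Let n ≥ 3, let 0 ≤ ψ < φ ≤ π/2 and 0 < θ < 2φ. Then A(n−1, ω(θ,φ)) ≤ A(n,θ,[ψ,φ]) ≤ A(n,θ,φ) ≤ A(n, ω(θ,φ)), where A(n−1,·) refers to codes on the unit sphere S^{n−2} ⊂ ℝ^{n−1}. -/
lemma inner_split {m : ℕ} (x y : EuclideanSpace ℝ (Fin (m+1))) :
    (inner ℝ x y : ℝ) = (∑ i : Fin m, x i.castSucc * y i.castSucc)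
      + x (Fin.last m) * y (Fin.last m) := by
  simp only [PiLp.inner_apply, Fin.sum_univ_castSucc]
  simp [mul_comm]

lemma inner_coord_sum {m : ℕ} (x y : EuclideanSpace ℝ (Fin m)) :
    (inner ℝ x y : ℝ) = ∑ i : Fin m, x i * y i := by
  simp only [PiLp.inner_apply]
  simp [mul_comm]

lemma inner_north {m : ℕ} (x : EuclideanSpace ℝ (Fin (m+1))) :
    (inner ℝ x (north (m+1)) : ℝ) = x (Fin.last m) := by
  have : north (m+1) = EuclideanSpace.single (Fin.last m) 1 := by
    simp [north, Fin.last]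
  rw [this, inner_split]
  simp [Fin.castSucc_ne_last]

/-- glue a last coordinate, scaling the first ones -/
noncomputable def glue {m : ℕ} (u : Fin m → ℝ) (a : ℝ) : EuclideanSpace ℝ (Fin (m+1)) :=
  WithLp.toLp 2 (Fin.snoc (α := fun _ => ℝ) u a)

lemma glue_castSucc {m : ℕ} (u : Fin m → ℝ) (a : ℝ) (i : Fin m) :
    glue u a i.castSucc = u i := by
  simp [glue]

lemma glue_last {m : ℕ} (u : Fin m → ℝ) (a : ℝ) :
    glue u a (Fin.last m) = a := by
  simp [glue]

lemma inner_glue {m : ℕ} (u v : Fin m → ℝ) (a b : ℝ) :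
    (inner ℝ (glue u a) (glue v b) : ℝ) = (∑ i, u i * v i) + a * b := by
  rw [inner_split]
  simp only [glue_castSucc, glue_last]

lemma norm_one_iff {m : ℕ} (x : EuclideanSpace ℝ (Fin m)) :
    ‖x‖ = 1 ↔ (inner ℝ x x : ℝ) = 1 := by
  rw [real_inner_self_eq_norm_sq]
  constructor
  · intro h; rw [h]; norm_num
  · intro h
    nlinarith [norm_nonneg x]

lemma code_bdd (n : ℕ) (θ : ℝ) (hθ : 0 < θ) :
    BddAbove {M | ∃ C : Finset (EuclideanSpace ℝ (Fin n)), IsCode θ C ∧ C.card = M} := by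
  classical
  -- separation in the Euclidean metric
  obtain ⟨δ, hδ, hsep⟩ : ∃ δ : ℝ, 0 < δ ∧ ∀ x y : EuclideanSpace ℝ (Fin n), ‖x‖ = 1 → ‖y‖ = 1 →
      θ ≤ aDist x y → δ ≤ dist x y := by
    set t := min θ Real.pi with ht
    have htpos : 0 < t := lt_min hθ Real.pi_pos
    have hc : Real.cos t < 1 := by
      rw [← Real.cos_zero]
      exact Real.cos_lt_cos_of_nonneg_of_le_pi le_rfl (min_le_right _ _) htpos
    refine ⟨Real.sqrt (2 - 2 * Real.cos t), Real.sqrt_pos.2 (by linarith), ?_⟩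
    intro x y hx hy hxy
    have h1 : |(inner ℝ x y : ℝ)| ≤ 1 := by
      have := abs_real_inner_le_norm x y
      rwa [hx, hy, one_mul] at this
    have h2 : (inner ℝ x y : ℝ) ≤ Real.cos t := by
      rw [← Real.cos_arccos (abs_le.1 h1).1 (abs_le.1 h1).2]
      exact Real.cos_le_cos_of_nonneg_of_le_pi htpos.le (Real.arccos_le_pi _)
        ((min_le_left _ _).trans hxy)
    rw [dist_eq_norm]
    apply Real.sqrt_le_iff.2
    refine ⟨norm_nonneg _, ?_⟩
    rw [norm_sub_sq_real, hx, hy]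
    linarith
  have hK : TotallyBounded (Metric.sphere (0 : EuclideanSpace ℝ (Fin n)) 1) :=
    (isCompact_sphere _ _).totallyBounded
  obtain ⟨T, hT, hcov⟩ := Metric.totallyBounded_iff.1 hK (δ / 2) (by linarith)
  refine ⟨hT.toFinset.card, ?_⟩
  rintro M ⟨C, ⟨hC1, hC2⟩, rfl⟩
  have hex : ∀ x ∈ C, ∃ y ∈ T, dist x y < δ / 2 := by
    intro x hx
    have := hcov (show x ∈ Metric.sphere (0 : EuclideanSpace ℝ (Fin n)) 1 by simp [hC1 x hx])
    simpa using this
  choose! f hf1 hf2 using hex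
  apply Finset.card_le_card_of_injOn f
  · intro x hx
    simpa using hf1 x hx
  · intro x hx y hy hxy
    by_contra hne
    have h1 := hsep x y (hC1 x hx) (hC1 y hy) (hC2 x hx y hy hne)
    have h2 := hf2 x hx
    have h3 := hf2 y hy
    rw [← hxy] at h3
    have := dist_triangle_right x y (f x)
    linarith

lemma sSup_le_of_forall {S T : Set ℕ} (hT : BddAbove T) (h : ∀ M ∈ S, M ∈ T) :
    sSup S ≤ sSup T := by
  rcases S.eq_empty_or_nonempty with rfl | hS
  · simp
  · exact csSup_le_csSup hT hS h

theorem stmt14 (n : ℕ) (hn : 3 ≤ n) (θ ψ φ : ℝ) (hψ : 0 ≤ ψ) (hψφ : ψ < φ)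
    (hφ : φ ≤ Real.pi / 2) (hθ : 0 < θ) (hθ2 : θ < 2 * φ) :
    sphereMax (n - 1) (omega1 θ φ) ≤ stripMax n θ ψ φ ∧
    stripMax n θ ψ φ ≤ capMax n θ φ ∧
    capMax n θ φ ≤ sphereMax n (omega1 θ φ) := by
  obtain ⟨m, rfl⟩ : ∃ m, n = m + 1 := ⟨n - 1, by omega⟩
  simp only [Nat.add_sub_cancel]
  have hφ0 : 0 < φ := by linarith
  have hpi := Real.pi_pos
  set s := Real.sin φ with hs
  set c := Real.cos φ with hc
  have hs0 : 0 < s := Real.sin_pos_of_pos_of_lt_pi hφ0 (by linarith)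
  have hc0 : 0 ≤ c := Real.cos_nonneg_of_neg_pi_div_two_le_of_le (by linarith) hφ
  have hsc : s ^ 2 + c ^ 2 = 1 := Real.sin_sq_add_cos_sq φ
  have hcosθ1 : Real.cos θ < 1 := by
    rw [← Real.cos_zero]
    exact Real.cos_lt_cos_of_nonneg_of_le_pi le_rfl (by linarith) hθ
  have hcosθ2 : c ^ 2 - s ^ 2 ≤ Real.cos θ := by
    have h1 : Real.cos (2 * φ) ≤ Real.cos θ :=
      Real.cos_le_cos_of_nonneg_of_le_pi hθ.le (by linarith) hθ2.le
    rw [Real.cos_two_mul, ← hc] at h1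
    linarith
  have hω : omega1 θ φ = Real.arccos ((Real.cos θ - c * c) / (s * s)) := rfl
  set q := (Real.cos θ - c * c) / (s * s) with hq
  have hss : 0 < s * s := by positivity
  have hq1 : q < 1 := by rw [hq, div_lt_one hss]; nlinarith
  have hq2 : -1 ≤ q := by rw [hq, le_div_iff₀ hss]; nlinarith
  have hqs : q * (s * s) = Real.cos θ - c * c := by rw [hq]; field_simp
  have hω0 : 0 < omega1 θ φ := by rw [hω]; exact Real.arccos_pos.2 hq1
  have habs : ∀ {k : ℕ} (x y : EuclideanSpace ℝ (Fin k)), ‖x‖ = 1 → ‖y‖ = 1 →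
      |(inner ℝ x y : ℝ)| ≤ 1 := by
    intro k x y hx hy
    have := abs_real_inner_le_norm x y
    rwa [hx, hy, one_mul] at this
  have hbcap : BddAbove {M | ∃ C : Finset (EuclideanSpace ℝ (Fin (m+1))), IsCode θ C ∧
      (∀ x ∈ C, aDist x (north (m+1)) ≤ φ) ∧ C.card = M} :=
    (code_bdd (m+1) θ hθ).mono (by rintro M ⟨C, h1, _, h3⟩; exact ⟨C, h1, h3⟩)
  have hbstrip : BddAbove {M | ∃ C : Finset (EuclideanSpace ℝ (Fin (m+1))), IsCode θ C ∧
      (∀ x ∈ C, ψ ≤ aDist x (north (m+1)) ∧ aDist x (north (m+1)) ≤ φ) ∧ C.card = M} :=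
    (code_bdd (m+1) θ hθ).mono (by rintro M ⟨C, h1, _, h3⟩; exact ⟨C, h1, h3⟩)
  classical
  refine ⟨sSup_le_of_forall hbstrip ?_, sSup_le_of_forall hbcap ?_,
    sSup_le_of_forall (code_bdd _ _ hω0) ?_⟩
  · rintro M ⟨C, ⟨hC1, hC2⟩, rfl⟩
    let f : EuclideanSpace ℝ (Fin m) → EuclideanSpace ℝ (Fin (m+1)) :=
      fun x => glue (fun i => s * x i) c
    have hfi : ∀ x y, (inner ℝ (f x) (f y) : ℝ) = s * s * inner ℝ x y + c * c := by
      intro x y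
      simp only [f]
      rw [inner_glue, inner_coord_sum, Finset.mul_sum]
      congr 1
      apply Finset.sum_congr rfl
      intro i _
      ring
    have hinj : Function.Injective f := by
      intro x y hxy
      ext i
      have := congrArg (fun z : EuclideanSpace ℝ (Fin (m+1)) => z i.castSucc) hxy
      simp only [f, glue_castSucc] at this
      exact mul_left_cancel₀ hs0.ne' this
    have hd : ∀ x, aDist (f x) (north (m+1)) = φ := by
      intro x
      simp only [aDist, inner_north, f, glue_last]
      exact Real.arccos_cos hφ0.le (by linarith)
    refine ⟨C.image f, ⟨?_, ?_⟩, ?_, Finset.card_image_of_injective _ hinj⟩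
    · intro z hz
      obtain ⟨x, hx, rfl⟩ := Finset.mem_image.1 hz
      rw [norm_one_iff, hfi, (norm_one_iff x).1 (hC1 x hx)]
      nlinarith
    · intro z hz w hw hne
      obtain ⟨x, hx, rfl⟩ := Finset.mem_image.1 hz
      obtain ⟨y, hy, rfl⟩ := Finset.mem_image.1 hw
      have h1 := hC2 x hx y hy (fun h => hne (by rw [h]))
      have h2 := abs_le.1 (habs x y (hC1 x hx) (hC1 y hy))
      have h3 : (inner ℝ x y : ℝ) ≤ q := by
        rw [hω, aDist] at h1
        have := Real.cos_le_cos_of_nonneg_of_le_pi (Real.arccos_nonneg _) (Real.arccos_le_pi _) h1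
        rwa [Real.cos_arccos h2.1 h2.2, Real.cos_arccos hq2 hq1.le] at this
      have h4 : (inner ℝ (f x) (f y) : ℝ) ≤ Real.cos θ := by
        rw [hfi]
        nlinarith
      rw [aDist]
      calc θ = Real.arccos (Real.cos θ) := (Real.arccos_cos hθ.le (by linarith)).symm
        _ ≤ _ := Real.arccos_le_arccos h4
    · intro z hz
      obtain ⟨x, hx, rfl⟩ := Finset.mem_image.1 hz
      rw [hd]
      exact ⟨hψφ.le, le_rfl⟩
  · rintro M ⟨C, h1, h2, h3⟩
    exact ⟨C, h1, fun x hx => (h2 x hx).2, h3⟩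
  · rintro M ⟨C, ⟨hC1, hC2⟩, hcap, rfl⟩
    let f : EuclideanSpace ℝ (Fin (m+1)) → EuclideanSpace ℝ (Fin (m+1)) :=
      fun x => glue (fun i => x i.castSucc / s)
        (Real.sqrt (x (Fin.last m) ^ 2 - c ^ 2) / s)
    have hlast : ∀ x ∈ C, c ≤ x (Fin.last m) := by
      intro x hx
      have h1 := hcap x hx
      have hn1 : ‖north (m+1)‖ = 1 := by
        rw [norm_one_iff, inner_north]
        simp [north, Fin.last]
      have h2 := abs_le.1 (habs x _ (hC1 x hx) hn1)
      rw [aDist] at h1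
      have := Real.cos_le_cos_of_nonneg_of_le_pi (Real.arccos_nonneg _) (by linarith) h1
      rwa [Real.cos_arccos h2.1 h2.2, inner_north] at this
    have hfi : ∀ x y, (inner ℝ (f x) (f y) : ℝ) * (s * s) =
        (inner ℝ x y - x (Fin.last m) * y (Fin.last m)) +
        Real.sqrt (x (Fin.last m) ^ 2 - c ^ 2) * Real.sqrt (y (Fin.last m) ^ 2 - c ^ 2) := by
      intro x y
      simp only [f]
      rw [inner_glue, inner_split, add_sub_cancel_right, add_mul, Finset.sum_mul]
      congr 1
      · apply Finset.sum_congr rfl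
        intro i _
        field_simp
      · field_simp
    have hfn : ∀ x ∈ C, ‖f x‖ = 1 := by
      intro x hx
      rw [norm_one_iff]
      have h1 := hfi x x
      have h2 := hlast x hx
      rw [(norm_one_iff x).1 (hC1 x hx), Real.mul_self_sqrt (by nlinarith)] at h1
      have h3 : (inner ℝ (f x) (f x) : ℝ) * (s * s) = 1 * (s * s) := by rw [h1]; nlinarith
      exact mul_right_cancel₀ hss.ne' h3
    have hle : ∀ x ∈ C, ∀ y ∈ C, x ≠ y → (inner ℝ (f x) (f y) : ℝ) ≤ q := by
      intro x hx y hy hne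
      have hx2 := hlast x hx
      have hy2 := hlast y hy
      have h1 := hC2 x hx y hy hne
      have h2 := abs_le.1 (habs x y (hC1 x hx) (hC1 y hy))
      have h3 : (inner ℝ x y : ℝ) ≤ Real.cos θ := by
        rw [aDist] at h1
        have := Real.cos_le_cos_of_nonneg_of_le_pi hθ.le (Real.arccos_le_pi _) h1
        rwa [Real.cos_arccos h2.1 h2.2] at this
      have h4 : Real.sqrt (x (Fin.last m) ^ 2 - c ^ 2) * Real.sqrt (y (Fin.last m) ^ 2 - c ^ 2)
          ≤ x (Fin.last m) * y (Fin.last m) - c * c := by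
        rw [← Real.sqrt_mul (by nlinarith)]
        apply Real.sqrt_le_iff.2
        constructor
        · nlinarith
        · nlinarith [mul_nonneg (sq_nonneg c) (sq_nonneg (x (Fin.last m) - y (Fin.last m)))]
      rw [hq, le_div_iff₀ hss, hfi]
      linarith
    have hinj : Set.InjOn f C := by
      intro x hx y hy hxy
      by_contra hne
      have h1 := hle x hx y hy hne
      rw [← hxy, (norm_one_iff _).1 (hfn x hx)] at h1
      linarith
    refine ⟨C.image f, ⟨?_, ?_⟩, Finset.card_image_of_injOn hinj⟩
    · intro z hz
      obtain ⟨x, hx, rfl⟩ := Finset.mem_image.1 hz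
      exact hfn x hx
    · intro z hz w hw hne
      obtain ⟨x, hx, rfl⟩ := Finset.mem_image.1 hz
      obtain ⟨y, hy, rfl⟩ := Finset.mem_image.1 hw
      rw [hω, aDist]
      exact Real.arccos_le_arccos (hle x hx y hy (fun h => hne (by rw [h])))
end
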